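/- Let K be a field, R = K[x,y], and J = (x^7, y^7, x^2 y^5, x^5 y^2) ⊂ R. Then (J^2 : J) ≠ J, (J^3 : J) = J^2, (J^4 : J) ≠ J^3, and (J^5 : J) = J^4; in particular J has the phenomenon of fluctuation in colon powers. -/

import Mathlib

open MvPolynomial

/-- `I` has the phenomenon of fluctuation in colon powers. -/
def HasFluctuationInColonPowers {R : Type*} [CommRing R] (I : Ideal R) : Prop :=
  ∃ a b c : ℕ, 0 < a ∧ a < b ∧ b < c ∧
    (((I ^ a).colon I = I ^ (a - 1) ∧ (I ^ b).colon I ≠ I ^ (b - 1) ∧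
        (I ^ c).colon I = I ^ (c - 1)) ∨
      ((I ^ a).colon I ≠ I ^ (a - 1) ∧ (I ^ b).colon I = I ^ (b - 1) ∧
        (I ^ c).colon I ≠ I ^ (c - 1)))

/-! The exponents of the monomials in `J ^ n`, for `J` generated by forms `x ^ a * y ^ (d - a)` with
`a ∈ A`, are the pairs `(i, j)` such that the integer interval `[nd - j, i]` meets the `n`-fold
sumset `nA`. Hence `(J ^ (n + 1) : J) = J ^ n` says that an interval meets `nA` as soon as all its
translates by elements of `A` meet `(n + 1)A`.

For `A = {0, 2, 5, 7}`, all gaps of `2A` in `[0, 14]` and of `4A` in `[0, 28]` are isolated, so an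
interval missing `nA` is a single gap, and each gap has a translate which is a gap of `3A` or `5A`.
On the other hand, `[3, 4]` misses `A` and `[8, 8]` misses `3A`, although all their translates meet
`2A` and `4A`. -/

open scoped Pointwise

theorem pow_le_colon_pow_succ {R : Type*} [CommSemiring R] (I : Ideal R) (n : ℕ) :
    I ^ n ≤ (I ^ (n + 1)).colon I := fun _ hr =>
  Submodule.mem_colon.2 fun _ hs => pow_succ I n ▸ Ideal.mul_mem_mul hr hs

section MonomialIdeal

variable {σ R : Type*} [CommSemiring R] {S T : Set (σ →₀ ℕ)} {p : MvPolynomial σ R}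

variable (R) in
/-- The monomial ideal of `MvPolynomial σ R` generated by the monomials with exponent in `S`. -/
noncomputable def monomialIdeal (S : Set (σ →₀ ℕ)) : Ideal (MvPolynomial σ R) :=
  Ideal.span ((fun s => monomial s 1) '' S)

theorem mem_monomialIdeal : p ∈ monomialIdeal R S ↔ ∀ m ∈ p.support, m ∈ upperClosure S :=
  mem_ideal_span_monomial_image

theorem monomialIdeal_le_iff [Nontrivial R] :
    monomialIdeal R S ≤ monomialIdeal R T ↔ S ⊆ upperClosure T := by
  classical
  simp [monomialIdeal.eq_def R S, Ideal.span_le, Set.subset_def, mem_monomialIdeal]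

variable (R) in
theorem monomialIdeal_add (S T : Set (σ →₀ ℕ)) :
    monomialIdeal R (S + T) = monomialIdeal R S * monomialIdeal R T := by
  simp only [monomialIdeal, Ideal.span_mul_span']
  exact congrArg Ideal.span (Set.image_image2_distrib fun s t => by simp [monomial_mul])

variable (R) in
theorem monomialIdeal_nsmul (n : ℕ) (S : Set (σ →₀ ℕ)) :
    monomialIdeal R (n • S) = monomialIdeal R S ^ n := by
  induction n with
  | zero => simp [monomialIdeal]
  | succ n ih => rw [succ_nsmul, monomialIdeal_add, ih, pow_succ]

theorem mul_monomial_mem_monomialIdeal {s : σ →₀ ℕ} :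
    p * monomial s 1 ∈ monomialIdeal R T ↔ ∀ m ∈ p.support, m + s ∈ upperClosure T := by
  simp only [mem_monomialIdeal, mem_support_iff]
  refine ⟨fun h m hm => h (m + s) (by simpa using hm), fun h m hm => ?_⟩
  rw [coeff_mul_monomial', mul_one, ite_ne_right_iff] at hm
  obtain ⟨hsm, hm⟩ := hm
  simpa only [tsub_add_cancel_of_le hsm] using h (m - s) hm

variable (R S T) in
theorem colon_monomialIdeal :
    (monomialIdeal R T).colon (monomialIdeal R S) =
      monomialIdeal R {m | ∀ s ∈ S, m + s ∈ upperClosure T} := by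
  set U : Set (σ →₀ ℕ) := {m | ∀ s ∈ S, m + s ∈ upperClosure T} with hU
  have isUpperSet_U : IsUpperSet U :=
    fun m m' hmm' hm s hs => (upperClosure T).upper (by gcongr) (hm s hs)
  have mem_upperClosure_U {m : σ →₀ ℕ} : m ∈ upperClosure U ↔ ∀ s ∈ S, m + s ∈ upperClosure T := by
    rw [← SetLike.mem_coe, isUpperSet_U.upperClosure, hU, Set.mem_ofPred_eq]
  ext p
  rw [monomialIdeal.eq_def R S, Ideal.colon_span, Submodule.mem_colon, mem_monomialIdeal]
  simp only [Set.forall_mem_image, smul_eq_mul, mul_monomial_mem_monomialIdeal,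
    mem_upperClosure_U]
  exact ⟨fun h m hm s hs => h hs m hm, fun h s hs m hm => h m hm s hs⟩

theorem colon_monomialIdeal_pow_succ_eq_iff [Nontrivial R] {n : ℕ} :
    (monomialIdeal R S ^ (n + 1)).colon (monomialIdeal R S) = monomialIdeal R S ^ n ↔
      ∀ m, (∀ s ∈ S, m + s ∈ upperClosure ((n + 1) • S)) → m ∈ upperClosure (n • S) := by
  rw [← (pow_le_colon_pow_succ _ n).ge_iff_eq', ← monomialIdeal_nsmul, ← monomialIdeal_nsmul,
    colon_monomialIdeal, monomialIdeal_le_iff]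
  rfl

end MonomialIdeal

section BinaryForms

/-- The exponent of the monomial `x ^ i * y ^ j` in two variables. -/
noncomputable def binaryExponent (i j : ℕ) : Fin 2 →₀ ℕ :=
  Finsupp.single 0 i + Finsupp.single 1 j

@[simp]
theorem binaryExponent_apply_zero (i j : ℕ) : binaryExponent i j 0 = i := by
  simp [binaryExponent]

@[simp]
theorem binaryExponent_apply_one (i j : ℕ) : binaryExponent i j 1 = j := by
  simp [binaryExponent]

theorem forall_binaryExponent {P : (Fin 2 →₀ ℕ) → Prop} :
    (∀ m, P m) ↔ ∀ i j, P (binaryExponent i j) := by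
  refine ⟨fun h i j => h _, fun h m => ?_⟩
  convert h (m 0) (m 1)
  ext t
  fin_cases t <;> simp

theorem binaryExponent_add (i j k l : ℕ) :
    binaryExponent (i + k) (j + l) = binaryExponent i j + binaryExponent k l := by
  ext t
  fin_cases t <;> simp

theorem binaryExponent_le_iff {i j k l : ℕ} :
    binaryExponent i j ≤ binaryExponent k l ↔ i ≤ k ∧ j ≤ l := by
  simp [Finsupp.le_def, Fin.forall_fin_two]

theorem monomial_binaryExponent {R : Type*} [CommSemiring R] (i j : ℕ) :
    monomial (binaryExponent i j) (1 : R) = X 0 ^ i * X 1 ^ j := by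
  simp [binaryExponent, X_pow_eq_monomial, monomial_mul]

variable {d e : ℕ} {A B : Finset ℕ}

/-- The exponents of the monomials `x ^ a * y ^ (d - a)` of degree `d` with `a ∈ A`. The elements of
`A` are meant to be at most `d`, so that the subtraction is not truncated. -/
def formExponents (d : ℕ) (A : Finset ℕ) : Set (Fin 2 →₀ ℕ) :=
  (fun a => binaryExponent a (d - a)) '' A

theorem formExponents_add (hA : A ⊆ Finset.Iic d) (hB : B ⊆ Finset.Iic e) :
    formExponents (d + e) (A + B) = formExponents d A + formExponents e B := by
  rw [formExponents, Finset.coe_add, ← Set.image2_add, Set.image_image2, formExponents,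
    formExponents, ← Set.image2_add, Set.image2_image_left, Set.image2_image_right]
  refine Set.image2_congr fun a ha b hb => ?_
  have had := Finset.mem_Iic.1 (hA ha)
  have hbe := Finset.mem_Iic.1 (hB hb)
  rw [← binaryExponent_add, tsub_add_tsub_comm had hbe]

theorem nsmul_subset_Iic (hA : A ⊆ Finset.Iic d) (n : ℕ) : n • A ⊆ Finset.Iic (n * d) := by
  induction n with
  | zero => simp
  | succ n ih =>
    rw [succ_nsmul, add_one_mul]
    exact (Finset.add_subset_add ih hA).trans (Finset.Iic_add_Iic_subset _ _)

theorem formExponents_nsmul (hA : A ⊆ Finset.Iic d) (n : ℕ) :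
    formExponents (n * d) (n • A) = n • formExponents d A := by
  induction n with
  | zero => simp [formExponents, binaryExponent, ← Set.singleton_zero]
  | succ n ih =>
    rw [succ_nsmul, succ_nsmul, add_one_mul, formExponents_add (nsmul_subset_Iic hA n) hA, ih]

theorem binaryExponent_mem_upperClosure_formExponents {i j : ℕ} :
    binaryExponent i j ∈ upperClosure (formExponents d A) ↔ ∃ a ∈ A, d ≤ a + j ∧ a ≤ i := by
  simp [formExponents, binaryExponent_le_iff, and_comm, add_comm]

variable {R : Type*} [CommSemiring R] {n : ℕ}

theorem colon_monomialIdeal_formExponents_pow_succ_eq_iff [Nontrivial R] (hA : A ⊆ Finset.Iic d) :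
    (monomialIdeal R (formExponents d A) ^ (n + 1)).colon (monomialIdeal R (formExponents d A)) =
        monomialIdeal R (formExponents d A) ^ n ↔
      ∀ i j, (∀ a ∈ A, ∃ c ∈ (n + 1) • A, n * d + a ≤ c + j ∧ c ≤ i + a) →
        ∃ c ∈ n • A, n * d ≤ c + j ∧ c ≤ i := by
  have translate_mem_iff {i j a : ℕ} (ha : a ∈ A) :
      binaryExponent i j + binaryExponent a (d - a) ∈
          upperClosure (formExponents ((n + 1) * d) ((n + 1) • A)) ↔
        ∃ c ∈ (n + 1) • A, n * d + a ≤ c + j ∧ c ≤ i + a := by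
    have had := Finset.mem_Iic.1 (hA ha)
    rw [← binaryExponent_add, binaryExponent_mem_upperClosure_formExponents, add_one_mul]
    exact exists_congr fun c => and_congr_right fun _ => and_congr_left fun _ => by omega
  rw [colon_monomialIdeal_pow_succ_eq_iff, forall_binaryExponent, ← formExponents_nsmul hA,
    ← formExponents_nsmul hA]
  refine forall₂_congr fun i j => imp_congr ?_ binaryExponent_mem_upperClosure_formExponents
  exact Set.forall_mem_image.trans (forall₂_congr fun a ha => translate_mem_iff ha)

theorem colon_monomialIdeal_formExponents_pow_succ_eq_of_isolated_gaps (hA : A ⊆ Finset.Iic d)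
    (zero_mem : 0 ∈ A) (isolated : ∀ g ≤ n * d, g ∉ n • A → g + 1 ∈ n • A)
    (exists_gap : ∀ g ≤ n * d, g ∉ n • A → ∃ a ∈ A, g + a ∉ (n + 1) • A) :
    (monomialIdeal R (formExponents d A) ^ (n + 1)).colon (monomialIdeal R (formExponents d A)) =
      monomialIdeal R (formExponents d A) ^ n := by
  nontriviality R
  refine (colon_monomialIdeal_formExponents_pow_succ_eq_iff hA).2 fun i j translates_meet => ?_
  have zero_mem_nsmul : 0 ∈ n • A := by simpa using Finset.nsmul_mem_nsmul (n := n) zero_mem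
  have left_le_right : n * d - j ≤ i := by
    obtain ⟨c, -, hc_left, hc_right⟩ := translates_meet 0 zero_mem
    omega
  by_contra! interval_misses
  have left_notMem : n * d - j ∉ n • A := fun h =>
    (interval_misses _ h le_tsub_add).not_ge left_le_right
  have left_add_right : n * d - j + j = n * d :=
    Nat.sub_add_cancel <| le_of_not_ge fun h =>
      left_notMem (Nat.sub_eq_zero_of_le h ▸ zero_mem_nsmul)
  have right_eq_left : i = n * d - j := by
    have := interval_misses _ (isolated _ (Nat.sub_le _ _) left_notMem) (by omega)
    omega
  obtain ⟨a, ha, translate_notMem⟩ := exists_gap _ (Nat.sub_le _ _) left_notMem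
  obtain ⟨c, hc, hc_left, hc_right⟩ := translates_meet a ha
  have c_eq : n * d - j + a = c := by omega
  exact translate_notMem (c_eq ▸ hc)

end BinaryForms

section SepticIdeal

/-- The exponents of `x` in the generators `x ^ 7, y ^ 7, x ^ 2 * y ^ 5, x ^ 5 * y ^ 2`. -/
def septicExponents : Finset ℕ := {7, 0, 2, 5}

theorem septicExponents_subset_Iic : septicExponents ⊆ Finset.Iic 7 := by decide

theorem two_nsmul_septicExponents :
    2 • septicExponents = Finset.Iic 14 \ {1, 3, 6, 8, 11, 13} := by decide

theorem three_nsmul_septicExponents :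
    3 • septicExponents = Finset.Iic 21 \ {1, 3, 8, 13, 18, 20} := by decide

theorem four_nsmul_septicExponents :
    4 • septicExponents = Finset.Iic 28 \ {1, 3, 25, 27} := by decide

theorem five_nsmul_septicExponents :
    5 • septicExponents = Finset.Iic 35 \ {1, 3, 32, 34} := by decide +kernel

variable (R : Type*) [CommSemiring R]

/-- The ideal `(x ^ 7, y ^ 7, x ^ 2 * y ^ 5, x ^ 5 * y ^ 2)` of `R[x, y]`, encoded through the
exponents of `x` in its generators. -/
noncomputable def septicIdeal : Ideal (MvPolynomial (Fin 2) R) :=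
  monomialIdeal R (formExponents 7 septicExponents)

theorem septicIdeal_eq_span :
    septicIdeal R =
      Ideal.span {X 0 ^ 7, X 1 ^ 7, X 0 ^ 2 * X 1 ^ 5, X 0 ^ 5 * X 1 ^ 2} := by
  rw [septicIdeal, monomialIdeal, formExponents, Set.image_image]
  simp [monomial_binaryExponent, septicExponents, Set.image_insert_eq]

theorem colon_septicIdeal_sq_ne [Nontrivial R] :
    (septicIdeal R ^ 2).colon (septicIdeal R) ≠ septicIdeal R := by
  have translates_meet : ∀ a ∈ septicExponents,
      ∃ c ∈ 2 • septicExponents, 1 * 7 + a ≤ c + 4 ∧ c ≤ 4 + a := by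
    rw [two_nsmul_septicExponents]
    decide
  have interval_misses : ¬∃ c ∈ 1 • septicExponents, 1 * 7 ≤ c + 4 ∧ c ≤ 4 := by
    rw [one_nsmul]
    decide
  intro h
  refine interval_misses ((colon_monomialIdeal_formExponents_pow_succ_eq_iff (R := R)
    septicExponents_subset_Iic).1 ?_ 4 4 translates_meet)
  rwa [pow_one]

theorem colon_septicIdeal_pow_three_eq :
    (septicIdeal R ^ 3).colon (septicIdeal R) = septicIdeal R ^ 2 := by
  refine colon_monomialIdeal_formExponents_pow_succ_eq_of_isolated_gaps septicExponents_subset_Iic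
    (by decide) ?_ ?_
  · rw [two_nsmul_septicExponents]
    decide
  · rw [two_nsmul_septicExponents, three_nsmul_septicExponents]
    decide

theorem colon_septicIdeal_pow_four_ne [Nontrivial R] :
    (septicIdeal R ^ 4).colon (septicIdeal R) ≠ septicIdeal R ^ 3 := by
  have translates_meet : ∀ a ∈ septicExponents,
      ∃ c ∈ 4 • septicExponents, 3 * 7 + a ≤ c + 13 ∧ c ≤ 8 + a := by
    rw [four_nsmul_septicExponents]
    decide
  have interval_misses : ¬∃ c ∈ 3 • septicExponents, 3 * 7 ≤ c + 13 ∧ c ≤ 8 := by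
    rw [three_nsmul_septicExponents]
    decide
  exact fun h => interval_misses ((colon_monomialIdeal_formExponents_pow_succ_eq_iff (R := R)
    septicExponents_subset_Iic).1 h 8 13 translates_meet)

theorem colon_septicIdeal_pow_five_eq :
    (septicIdeal R ^ 5).colon (septicIdeal R) = septicIdeal R ^ 4 := by
  refine colon_monomialIdeal_formExponents_pow_succ_eq_of_isolated_gaps septicExponents_subset_Iic
    (by decide) ?_ ?_
  · rw [four_nsmul_septicExponents]
    decide
  · rw [four_nsmul_septicExponents, five_nsmul_septicExponents]
    decide

end SepticIdeal

theorem stmt_18_general {K : Type*} [CommRing K] [Nontrivial K]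
    (J : Ideal (MvPolynomial (Fin 2) K))
    (hJ : J = Ideal.span {X 0 ^ 7, X 1 ^ 7, X 0 ^ 2 * X 1 ^ 5, X 0 ^ 5 * X 1 ^ 2}) :
    (J ^ 2).colon J ≠ J ∧ (J ^ 3).colon J = J ^ 2 ∧ (J ^ 4).colon J ≠ J ^ 3 ∧
      (J ^ 5).colon J = J ^ 4 ∧ HasFluctuationInColonPowers J := by
  obtain rfl : J = septicIdeal K := hJ.trans (septicIdeal_eq_span K).symm
  have sq_ne := colon_septicIdeal_sq_ne K
  have pow_three_eq := colon_septicIdeal_pow_three_eq K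
  have pow_four_ne := colon_septicIdeal_pow_four_ne K
  refine ⟨sq_ne, pow_three_eq, pow_four_ne, colon_septicIdeal_pow_five_eq K, 2, 3, 4, ?_⟩
  exact ⟨by decide, by decide, by decide, .inr ⟨by rwa [pow_one], pow_three_eq, pow_four_ne⟩⟩

theorem stmt_18 {K : Type*} [Field K] (J : Ideal (MvPolynomial (Fin 2) K))
    (hJ : J = Ideal.span {X 0 ^ 7, X 1 ^ 7, X 0 ^ 2 * X 1 ^ 5, X 0 ^ 5 * X 1 ^ 2}) :
    (J ^ 2).colon J ≠ J ∧ (J ^ 3).colon J = J ^ 2 ∧ (J ^ 4).colon J ≠ J ^ 3 ∧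
      (J ^ 5).colon J = J ^ 4 ∧ HasFluctuationInColonPowers J :=
  stmt_18_general J hJ
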